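/- Let D_1 and D_2 be two vertex-disjoint digraphs with Hamiltonian cycles C_1 = (x_0, x_1, …, x_{n−1}, x_0) and C_2 = (y_0, y_1, …, y_{m−1}, y_0) respectively, and let D ∈ D_1 ⊕ D_2. Let l be a fixed integer with m+2 ≤ l ≤ n+m such that D has no directed cycle of length l, let h = l − (m+1), and let d = gcd(n, m). Then (with subscripts of the x's taken modulo n and of the y's modulo m): (a) if (x_s, y_r) ∈ A(D), then (x_{s+ih}, y_{r+i}) ∈ A(D) and (x_s, y_{r+id}) ∈ A(D) for every integer i ≥ 0; and (b) if (y_{r'}, x_{s'}) ∈ A(D), then (y_{r'+i}, x_{s'+ih}) ∈ A(D) and (y_{r'+id}, x_{s'}) ∈ A(D) for every integer i ≥ 0. -/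

import Mathlib

/-!
The integer `h` satisfies `1 ≤ h ≤ n - 1` and `l = m + (h + 1)`. If both `y_r → x_s` and
`x_{s+h} → y_{r+1}` were arcs, then `y_{r+1}, …, y_{r+m} = y_r, x_s, …, x_{s+h}` would be a directed
cycle of length `l`. Hence `y_r → x_s` forces `y_{r+1} → x_{s+h}`
(`arc_step`), because exactly one arc joins any two vertices of different summands.

So the set of pairs `(s, r)` with `y_r → x_s` is closed under the translation by `(h, 1)` of the
finite group `ZMod n × ZMod m`, and therefore so is its complement (`shift_iff`). Translating
`k * n` times, where `k * n ≡ gcd n m` modulo `m`, fixes the first coordinate and moves the second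
by `gcd n m` (`shift_gcd_iff`). The complement is the set of pairs with `x_s → y_r`, which gives
both halves of the theorem.
-/

/-- A digraph: a finite vertex set together with an irreflexive arc relation
whose arcs join vertices of the digraph. -/
structure FinDigraph (α : Type) [DecidableEq α] where
  verts : Finset α
  Arc : α → α → Prop
  arc_mem_left : ∀ {u v : α}, Arc u v → u ∈ verts
  arc_mem_right : ∀ {u v : α}, Arc u v → v ∈ verts
  arc_irrefl : ∀ v : α, ¬ Arc v v

namespace FinDigraph

variable {α : Type} [DecidableEq α]

/-- `c` lists, in cyclic order, the vertices of a directed cycle of length `l` in `D`. -/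
def CycleOn (D : FinDigraph α) {l : ℕ} (c : ZMod l → α) : Prop :=
  Function.Injective c ∧ ∀ i : ZMod l, D.Arc (c i) (c (i + 1))

/-- `D` contains a directed cycle of length `l`. -/
def HasCycle (D : FinDigraph α) (l : ℕ) : Prop :=
  ∃ c : ZMod l → α, D.CycleOn c

/-- `D` contains a directed cycle of length `l` passing through `v`. -/
def HasCycleThrough (D : FinDigraph α) (l : ℕ) (v : α) : Prop :=
  ∃ c : ZMod l → α, D.CycleOn c ∧ ∃ i : ZMod l, c i = v

/-- `c` is a Hamiltonian cycle of `D`. -/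
def IsHamCycle (D : FinDigraph α) {l : ℕ} (c : ZMod l → α) : Prop :=
  D.CycleOn c ∧ ∀ v ∈ D.verts, ∃ i : ZMod l, c i = v

/-- `D` contains a directed cycle through all of its vertices. -/
def Hamiltonian (D : FinDigraph α) : Prop :=
  ∃ c : ZMod D.verts.card → α, D.IsHamCycle c

/-- For every ordered pair of vertices `u`, `v` there is a directed path from `u` to `v`. -/
def Strong (D : FinDigraph α) : Prop :=
  ∀ u ∈ D.verts, ∀ v ∈ D.verts, Relation.ReflTransGen D.Arc u v

/-- `D` (of order at least 3) has directed cycles of every length from 3 to its order. -/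
def Pancyclic (D : FinDigraph α) : Prop :=
  3 ≤ D.verts.card ∧ ∀ l : ℕ, 3 ≤ l → l ≤ D.verts.card → D.HasCycle l

/-- Every vertex of `D` lies on directed cycles of every length from 3 to the order of `D`. -/
def VertexPancyclic (D : FinDigraph α) : Prop :=
  3 ≤ D.verts.card ∧
    ∀ v ∈ D.verts, ∀ l : ℕ, 3 ≤ l → l ≤ D.verts.card → D.HasCycleThrough l v

/-- `D` is a generalized sum of the two vertex-disjoint digraphs `D1` and `D2`:
its vertex set is the union of theirs, it induces each of them, and between any two
vertices of different summands there is exactly one arc. -/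
def GenSum2 (D1 D2 D : FinDigraph α) : Prop :=
  D.verts = D1.verts ∪ D2.verts ∧
  (∀ u v : α, u ∈ D1.verts → v ∈ D1.verts → (D.Arc u v ↔ D1.Arc u v)) ∧
  (∀ u v : α, u ∈ D2.verts → v ∈ D2.verts → (D.Arc u v ↔ D2.Arc u v)) ∧
  (∀ u v : α, u ∈ D1.verts → v ∈ D2.verts → Xor' (D.Arc u v) (D.Arc v u))

/-- `D` is a generalized sum of the pairwise vertex-disjoint digraphs `Ds i`. -/
def GenSum {k : ℕ} (Ds : Fin k → FinDigraph α) (D : FinDigraph α) : Prop :=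
  D.verts = Finset.univ.biUnion (fun i => (Ds i).verts) ∧
  (∀ i : Fin k, ∀ u v : α, u ∈ (Ds i).verts → v ∈ (Ds i).verts →
    (D.Arc u v ↔ (Ds i).Arc u v)) ∧
  (∀ i j : Fin k, i ≠ j → ∀ u v : α, u ∈ (Ds i).verts → v ∈ (Ds j).verts →
    Xor' (D.Arc u v) (D.Arc v u))

end FinDigraph

open FinDigraph

/-- A Hamiltonian cycle is an injective map into a finite vertex set, which excludes
the index set `ZMod 0 = ℤ`. -/
lemma hamCycle_ne_zero {α : Type} [DecidableEq α] {D : FinDigraph α} {n : ℕ} {x : ZMod n → α}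
    (hx : D.IsHamCycle x) : n ≠ 0 := by
  rintro rfl
  have hfin : (Set.range x).Finite :=
    D.verts.finite_toSet.subset (by
      rintro _ ⟨i, rfl⟩
      exact D.arc_mem_left (hx.1.2 i))
  have : Infinite (ZMod 0) := inferInstanceAs (Infinite ℤ)
  exact Set.infinite_range_of_injective hx.1.1 hfin

lemma hasCycle_of_nat {α : Type} [DecidableEq α] {D : FinDigraph α} {l : ℕ} (hl : 2 ≤ l)
    (f : ℕ → α) (hinj : ∀ i j, i < l → j < l → f i = f j → i = j)
    (harc : ∀ i, i + 1 < l → D.Arc (f i) (f (i + 1))) (hlast : D.Arc (f (l - 1)) (f 0)) :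
    D.HasCycle l := by
  have : NeZero l := ⟨by omega⟩
  have : Fact (1 < l) := ⟨by omega⟩
  refine ⟨fun i => f i.val, ?_, ?_⟩
  · intro i j hij
    exact ZMod.val_injective l (hinj _ _ i.val_lt j.val_lt hij)
  · intro i
    have hi := i.val_lt
    have hv : (i + 1).val = (i.val + 1) % l := by rw [ZMod.val_add, ZMod.val_one]
    show D.Arc (f i.val) (f (i + 1).val)
    rw [hv]
    by_cases hlt : i.val + 1 < l
    · rw [Nat.mod_eq_of_lt hlt]
      exact harc _ hlt
    · have h1 : i.val + 1 = l := by omega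
      rw [h1, Nat.mod_self, show i.val = l - 1 by omega]
      exact hlast

lemma natCast_zmod_inj {n i j : ℕ} (hi : i < n) (hj : j < n) (hij : (i : ZMod n) = j) : i = j := by
  rw [ZMod.natCast_eq_natCast_iff'] at hij
  rwa [Nat.mod_eq_of_lt hi, Nat.mod_eq_of_lt hj] at hij

/-- The key step: in the absence of an `l`-cycle, `y_r → x_s` forces `y_{r+1} → x_{s+h}`. -/
lemma arc_step {α : Type} [DecidableEq α]
    {D1 D2 D : FinDigraph α} {n m : ℕ} {x : ZMod n → α} {y : ZMod m → α}
    (hx : D1.IsHamCycle x) (hy : D2.IsHamCycle y)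
    (hdisj : Disjoint D1.verts D2.verts) (hD : GenSum2 D1 D2 D) {h : ℕ} (hhn : h < n)
    (hnoc : ¬ D.HasCycle (m + (h + 1))) (s : ZMod n) (r : ZMod m) (ha : D.Arc (y r) (x s)) :
    D.Arc (y (r + 1)) (x (s + h)) := by
  have hm := hamCycle_ne_zero hy
  have hxm : ∀ i, x i ∈ D1.verts := fun i => D1.arc_mem_left (hx.1.2 i)
  have hym : ∀ i, y i ∈ D2.verts := fun i => D2.arc_mem_left (hy.1.2 i)
  have hxy : ∀ i j, x i ≠ y j := fun i j e =>
    Finset.disjoint_left.mp hdisj (hxm i) (e ▸ hym j)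
  have hxa : ∀ i, D.Arc (x i) (x (i + 1)) := fun i =>
    (hD.2.1 _ _ (hxm _) (hxm _)).2 (hx.1.2 i)
  have hya : ∀ i, D.Arc (y i) (y (i + 1)) := fun i =>
    (hD.2.2.1 _ _ (hym _) (hym _)).2 (hy.1.2 i)
  by_contra hcon
  have hback : D.Arc (x (s + h)) (y (r + 1)) := by
    rcases hD.2.2.2 _ _ (hxm (s + h)) (hym (r + 1)) with hc | hc
    · exact hc.1
    · exact absurd hc.1 hcon
  apply hnoc
  refine hasCycle_of_nat (by omega)
    (fun k => if k < m then y (r + 1 + (k : ℕ)) else x (s + ((k - m : ℕ) : ZMod n))) ?_ ?_ ?_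
  · intro i j hi hj hij
    split_ifs at hij with h1 h2 h2
    · exact natCast_zmod_inj h1 h2 (add_left_cancel (hy.1.1 hij))
    · exact absurd hij.symm (hxy _ _)
    · exact absurd hij (hxy _ _)
    · have := natCast_zmod_inj (by omega) (by omega) (add_left_cancel (hx.1.1 hij))
      omega
  · intro i hi
    rcases lt_trichotomy (i + 1) m with h1 | h1 | h1
    · rw [if_pos (by omega), if_pos h1]
      have := hya (r + 1 + (i : ℕ))
      rwa [add_assoc _ _ (1 : ZMod m), ← Nat.cast_succ] at this
    · rw [if_pos (by omega), if_neg (by omega), h1, Nat.sub_self, Nat.cast_zero, add_zero]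
      -- the part of the cycle inside the second summand ends at `y_{r+m} = y_r`
      have h2 : r + 1 + (i : ZMod m) = r := by
        have h3 : ((i + 1 : ℕ) : ZMod m) = 0 := by rw [h1, ZMod.natCast_self]
        push_cast at h3
        rw [add_assoc, add_comm 1, h3, add_zero]
      rwa [h2]
    · rw [if_neg (by omega), if_neg (by omega), show i + 1 - m = (i - m) + 1 by omega]
      have := hxa (s + ((i - m : ℕ) : ZMod n))
      rwa [add_assoc _ _ (1 : ZMod n), ← Nat.cast_succ] at this
  · rw [if_neg (by omega), if_pos (by omega), show m + (h + 1) - 1 - m = h by omega,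
      Nat.cast_zero, add_zero]
    exact hback

/-- A subset of `ZMod n × ZMod m` closed under translation by `(h, 1)` is invariant under it,
since this translation has finite order. -/
lemma shift_iff {n m h : ℕ} (hn : n ≠ 0) (hm : m ≠ 0) {P : ZMod n → ZMod m → Prop}
    (hP : ∀ s r, P s r → P (s + h) (r + 1)) (s : ZMod n) (r : ZMod m) (i : ℕ) :
    P (s + ((i * h : ℕ) : ZMod n)) (r + (i : ZMod m)) ↔ P s r := by
  have key : ∀ (j : ℕ) (s : ZMod n) (r : ZMod m),
      P s r → P (s + ((j * h : ℕ) : ZMod n)) (r + (j : ZMod m)) := by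
    intro j
    induction j with
    | zero => intro s r hp; simpa using hp
    | succ j ih =>
      intro s r hp
      have := hP _ _ (ih s r hp)
      convert this using 1 <;> push_cast <;> ring
  refine ⟨fun hp => ?_, key i s r⟩
  -- `i + (n * m - 1) * i = n * m * i` translations amount to the identity
  have h1 := key ((n * m - 1) * i) _ _ hp
  have h2 : i + (n * m - 1) * i = n * m * i := by
    have : 1 ≤ n * m := Nat.one_le_iff_ne_zero.mpr (mul_ne_zero hn hm)
    obtain ⟨t, ht⟩ := Nat.exists_eq_add_of_le this
    rw [ht, Nat.add_sub_cancel_left]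
    ring
  rw [add_assoc, add_assoc, ← Nat.cast_add, ← Nat.cast_add, ← add_mul, h2] at h1
  simpa using h1

lemma shift_gcd_iff {n m h : ℕ} (hn : n ≠ 0) (hm : m ≠ 0) {P : ZMod n → ZMod m → Prop}
    (hP : ∀ s r, P s r → P (s + h) (r + 1)) (s : ZMod n) (r : ZMod m) (i : ℕ) :
    P s (r + ((i * Nat.gcd n m : ℕ) : ZMod m)) ↔ P s r := by
  have : NeZero m := ⟨hm⟩
  -- Bézout: `k * n ≡ gcd n m` modulo `m`
  obtain ⟨k, hk⟩ : ∃ k : ℕ, ((k * n : ℕ) : ZMod m) = (Nat.gcd n m : ZMod m) := by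
    refine ⟨((Nat.gcdA n m : ℤ) : ZMod m).val, ?_⟩
    have := congrArg (Int.cast : ℤ → ZMod m) (Nat.gcd_eq_gcd_ab n m)
    push_cast at this
    rw [Nat.cast_mul, ZMod.natCast_zmod_val, this]
    simp [mul_comm]
  have h1 := shift_iff hn hm hP s r (i * (k * n))
  have h2 : ((i * (k * n) * h : ℕ) : ZMod n) = 0 := by simp
  have h3 : ((i * (k * n) : ℕ) : ZMod m) = ((i * Nat.gcd n m : ℕ) : ZMod m) := by
    rw [Nat.cast_mul, hk, Nat.cast_mul]
  rwa [h2, h3, add_zero] at h1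

theorem stmt_16 {α : Type} [DecidableEq α]
    (D1 D2 D : FinDigraph α) {n m : ℕ}
    (x : ZMod n → α) (y : ZMod m → α)
    (hx : D1.IsHamCycle x) (hy : D2.IsHamCycle y)
    (hdisj : Disjoint D1.verts D2.verts)
    (hD : GenSum2 D1 D2 D)
    (l : ℕ) (hl : m + 2 ≤ l) (hl' : l ≤ n + m) (hnoc : ¬ D.HasCycle l)
    (h : ℕ) (hh : h = l - (m + 1)) (d : ℕ) (hd : d = Nat.gcd n m) :
    (∀ (s : ZMod n) (r : ZMod m), D.Arc (x s) (y r) →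
      ∀ i : ℕ,
        D.Arc (x (s + ((i * h : ℕ) : ZMod n))) (y (r + (i : ZMod m))) ∧
        D.Arc (x s) (y (r + ((i * d : ℕ) : ZMod m)))) ∧
    (∀ (r' : ZMod m) (s' : ZMod n), D.Arc (y r') (x s') →
      ∀ i : ℕ,
        D.Arc (y (r' + (i : ZMod m))) (x (s' + ((i * h : ℕ) : ZMod n))) ∧
        D.Arc (y (r' + ((i * d : ℕ) : ZMod m))) (x s')) := by
  have hn := hamCycle_ne_zero hx
  have hm := hamCycle_ne_zero hy
  have hlm : l = m + (h + 1) := by omega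
  have hstep : ∀ s r, D.Arc (y r) (x s) → D.Arc (y (r + 1)) (x (s + h)) := fun s r =>
    arc_step hx hy hdisj hD (by omega) (hlm ▸ hnoc) s r
  have hxor : ∀ s r, D.Arc (x s) (y r) ↔ ¬ D.Arc (y r) (x s) := by
    intro s r
    rcases hD.2.2.2 _ _ (D1.arc_mem_left (hx.1.2 s)) (D2.arc_mem_left (hy.1.2 r)) with hc | hc <;>
      tauto
  have hA := shift_iff (P := fun s r => D.Arc (y r) (x s)) hn hm hstep
  have hB := shift_gcd_iff (P := fun s r => D.Arc (y r) (x s)) hn hm hstep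
  subst hd
  refine ⟨fun s r ha i => ?_, fun r s ha i => ⟨(hA s r i).2 ha, (hB s r i).2 ha⟩⟩
  rw [hxor] at ha
  rw [hxor, hxor]
  exact ⟨fun hc => ha ((hA s r i).1 hc), fun hc => ha ((hB s r i).1 hc)⟩
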